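/- (Global lower bound in Theorem 1's proof.) Let d, k0, k be positive integers with k > k0, let Θ be a compact subset of ℝ^d × S_d^+ × ℝ^d × ℝ × ℝ_{>0}, let β ∈ (0, 1/k], and let G0 = Σ_{j=1}^{k0} π_j^0 δ_{θ_j^0} be a mixing measure with pairwise distinct components θ_j^0 ∈ Θ and weights π_j^0 > 0 summing to 1, with c_j^0 ≠ 0 for every j. Then for every ε > 0, the infimum of V(p_G, p_{G0}) over all G ∈ O_{k,β}(Θ) with D̄(G, G0) > ε is strictly positive. -/

import Mathlib

open Matrix MeasureTheory

/-- The parameter space `ℝ^d × (d×d matrices) × ℝ^d × ℝ × ℝ` of one expert component. -/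
abbrev Param (d : ℕ) : Type :=
  (Fin d → ℝ) × Matrix (Fin d) (Fin d) ℝ × (Fin d → ℝ) × ℝ × ℝ

/-- The univariate Gaussian density with mean `b` and variance `ν`. -/
noncomputable def gauss1 (y b ν : ℝ) : ℝ :=
  (2 * Real.pi * ν) ^ (-(1 : ℝ) / 2) * Real.exp (-((y - b) ^ 2) / (2 * ν))

/-- The `d`-variate Gaussian density with mean `c` and covariance matrix `Γ`. -/
noncomputable def gaussd (d : ℕ) (x c : Fin d → ℝ) (Γ : Matrix (Fin d) (Fin d) ℝ) : ℝ :=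
  (2 * Real.pi) ^ (-(d : ℝ) / 2) * Γ.det ^ (-(1 : ℝ) / 2) *
    Real.exp (-(1 / 2) * ((x - c) ⬝ᵥ (Γ⁻¹ *ᵥ (x - c))))

/-- The joint density of one component:
`F(x, y | (c, Γ, a, b, ν)) = N_d(x; c, Γ) · φ(y; aᵀx + b, ν)`. -/
noncomputable def Fcomp {d : ℕ} (θ : Param d) (x : Fin d → ℝ) (y : ℝ) : ℝ :=
  gaussd d x θ.1 θ.2.1 * gauss1 y (θ.2.2.1 ⬝ᵥ x + θ.2.2.2.1) θ.2.2.2.2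

/-- The total variation distance `V(p, q) = (1/2)∫|p − q|` between two densities on
`ℝ^d × ℝ`. -/
noncomputable def TV {d : ℕ} (p q : (Fin d → ℝ) × ℝ → ℝ) : ℝ :=
  (1 / 2) * ∫ z, |p z - q z|

/-- The Euclidean norm of a vector in `ℝ^d`. -/
noncomputable def vnorm {d : ℕ} (v : Fin d → ℝ) : ℝ :=
  Real.sqrt (∑ i, (v i) ^ 2)

/-- The Frobenius norm of a `d×d` real matrix. -/
noncomputable def mnorm {d : ℕ} (M : Matrix (Fin d) (Fin d) ℝ) : ℝ :=
  Real.sqrt (∑ i, ∑ j, (M i j) ^ 2)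

/-- The Euclidean distance on the parameter space (Frobenius norm on the matrix
coordinate). -/
noncomputable def pdist {d : ℕ} (θ η : Param d) : ℝ :=
  Real.sqrt ((vnorm (θ.1 - η.1)) ^ 2 + (mnorm (θ.2.1 - η.2.1)) ^ 2 +
    (vnorm (θ.2.2.1 - η.2.2.1)) ^ 2 + (θ.2.2.2.1 - η.2.2.2.1) ^ 2 +
    (θ.2.2.2.2 - η.2.2.2.2) ^ 2)

open Classical in
/-- The Voronoi cell `A_j(G)` generated by the true component `θ0 j`: the indices `i`
of the fitted components whose parameter `θ i` is at least as close to `θ0 j` as to any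
other true component. -/
noncomputable def cell {d k0 : ℕ} (θ0 : Fin k0 → Param d) {m : ℕ}
    (θ : Fin m → Param d) (j : Fin k0) : Finset (Fin m) :=
  Finset.univ.filter (fun i => ∀ l, l ≠ j → pdist (θ i) (θ0 j) ≤ pdist (θ i) (θ0 l))

/-- The `s`-th equation of the bar-system:
`Σ_{l=1}^m Σ_{n₁+2n₂=s} p_l² q_{1,l}^{n₁} q_{2,l}^{n₂} / (n₁!·n₂!)`. -/
noncomputable def barEq (m : ℕ) (p q1 q2 : Fin m → ℝ) (s : ℕ) : ℝ :=
  ∑ l : Fin m,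
    ∑ nn ∈ (Finset.range (s + 1) ×ˢ Finset.range (s + 1)).filter
        (fun nn => nn.1 + 2 * nn.2 = s),
      p l ^ 2 * q1 l ^ nn.1 * q2 l ^ nn.2 /
        ((nn.1.factorial : ℝ) * (nn.2.factorial : ℝ))

/-- The bar-system of order `(m, r)` admits a non-trivial solution: all `p_l ≠ 0`,
some `q_{1,l} ≠ 0`, and the equations hold for every `s = 1, …, r`. -/
def barSol (m r : ℕ) : Prop :=
  ∃ p q1 q2 : Fin m → ℝ,
    (∀ l, p l ≠ 0) ∧ (∃ l, q1 l ≠ 0) ∧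
    ∀ s : ℕ, 1 ≤ s → s ≤ r → barEq m p q1 q2 s = 0

/-- `r̄(m)`: the smallest positive integer `r` such that the bar-system of order
`(m, r)` admits no non-trivial solution. -/
noncomputable def rbar (m : ℕ) : ℕ := sInf {r : ℕ | 1 ≤ r ∧ ¬ barSol m r}

/-- The Voronoi loss `D̄(G, G0)` of the Type I setting. -/
noncomputable def Dbar {d k0 : ℕ} (π0 : Fin k0 → ℝ) (θ0 : Fin k0 → Param d)
    {m : ℕ} (w : Fin m → ℝ) (θ : Fin m → Param d) : ℝ :=
  (∑ j : Fin k0,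
    if 1 < (cell θ0 θ j).card then
      ∑ i ∈ cell θ0 θ j, w i *
        (vnorm ((θ i).1 - (θ0 j).1) ^ ((rbar (cell θ0 θ j).card : ℝ))
          + mnorm ((θ i).2.1 - (θ0 j).2.1) ^ ((rbar (cell θ0 θ j).card : ℝ) / 2)
          + vnorm ((θ i).2.2.1 - (θ0 j).2.2.1) ^ (2 : ℕ)
          + |(θ i).2.2.2.1 - (θ0 j).2.2.2.1| ^ ((rbar (cell θ0 θ j).card : ℝ))
          + |(θ i).2.2.2.2 - (θ0 j).2.2.2.2| ^ ((rbar (cell θ0 θ j).card : ℝ) / 2))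
    else 0)
  + (∑ j : Fin k0,
    if (cell θ0 θ j).card = 1 then
      ∑ i ∈ cell θ0 θ j, w i *
        (vnorm ((θ i).1 - (θ0 j).1) + mnorm ((θ i).2.1 - (θ0 j).2.1)
          + vnorm ((θ i).2.2.1 - (θ0 j).2.2.1) + |(θ i).2.2.2.1 - (θ0 j).2.2.2.1|
          + |(θ i).2.2.2.2 - (θ0 j).2.2.2.2|)
    else 0)
  + ∑ j : Fin k0, |(∑ i ∈ cell θ0 θ j, w i) - π0 j|

/-!
Suppose mixing measures `G` with weights at least `β` and atoms in `Θ` satisfy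
`V(p_G, p_{G0}) → 0`. By compactness their weights and atoms accumulate at some `(w, θ)`, whose
mixture density must be `p_{G0}`. Regular Gaussian components are linearly independent: along a
generic line through the origin they are multiples of exponentials of distinct quadratic
polynomials. Hence `(w, θ)` represents the measure `G0`, possibly with atoms split.

The exponents `rbar` are positive: the left-hand sides of the bar-system are the Taylor coefficients
of `∑ l, p_l² exp (q_{2,l} t² + q_{1,l} t)`, which is not constant in the non-trivial case, and by
Hilbert's basis theorem finitely many of the equations imply all of them. So the loss vanishes at
`(w, θ)`. Near `(w, θ)` the Voronoi cells do not change, which makes the loss continuous there;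
therefore `D̄(G, G0)` cannot stay above `ε`.
-/

open Filter Topology

/-! ### Exponentials of quadratic polynomials -/

lemma tendsto_exp_quadratic_atTop_zero {p : ℝ × ℝ} (hp : toLex p < 0) :
    Tendsto (fun t : ℝ => Real.exp (p.1 * t ^ 2 + p.2 * t)) atTop (𝓝 0) := by
  obtain ⟨b, a⟩ := p
  refine Real.tendsto_exp_atBot.comp ?_
  rcases Prod.Lex.toLex_lt_toLex.1 hp with hb | ⟨hb, ha⟩
  · have hslope : Tendsto (fun t : ℝ => b * t + a) atTop atBot :=
      tendsto_atBot_add_const_right _ _ (tendsto_id.const_mul_atTop_of_neg hb)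
    exact (tendsto_id.atTop_mul_atBot₀ hslope).congr fun t => by simp only [id]; ring
  · obtain rfl : b = 0 := hb
    exact (tendsto_id.const_mul_atTop_of_neg ha).congr fun t => by simp

lemma linearIndependent_exp_quadratic :
    LinearIndependent ℝ fun (p : ℝ × ℝ) (t : ℝ) => Real.exp (p.1 * t ^ 2 + p.2 * t) := by
  refine linearIndependent_iff'.2 fun s c hsum => ?_
  by_contra! hne
  -- After division by the lexicographically largest exponential present, only its own
  -- coefficient survives as `t → ∞`.
  obtain ⟨p, hp, hmax⟩ := (s.filter (c · ≠ 0)).exists_max_image toLex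
    (by simpa [Finset.Nonempty] using hne)
  obtain ⟨hps, hcp⟩ := Finset.mem_filter.1 hp
  have hlim : ∀ q ∈ s, Tendsto
      (fun t : ℝ => c q * Real.exp ((q - p).1 * t ^ 2 + (q - p).2 * t)) atTop
      (𝓝 (if q = p then c p else 0)) := by
    intro q hq
    split_ifs with hqp
    · simp [hqp]
    · by_cases hcq : c q = 0
      · simp [hcq]
      · have hlt : toLex q < toLex p :=
          (hmax q (Finset.mem_filter.2 ⟨hq, hcq⟩)).lt_of_ne (toLex.injective.ne hqp)
        simpa using (tendsto_exp_quadratic_atTop_zero (p := q - p) (sub_neg.2 hlt)).const_mul (c q)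
  have hzero : ∀ t : ℝ,
      ∑ q ∈ s, c q * Real.exp ((q - p).1 * t ^ 2 + (q - p).2 * t) = 0 := by
    intro t
    have hsplit : ∀ q : ℝ × ℝ, Real.exp ((q - p).1 * t ^ 2 + (q - p).2 * t) =
        Real.exp (q.1 * t ^ 2 + q.2 * t) * Real.exp (-(p.1 * t ^ 2 + p.2 * t)) := by
      intro q
      rw [← Real.exp_add, Prod.fst_sub, Prod.snd_sub]
      ring_nf
    have hsum_t := congrFun hsum t
    simp only [Finset.sum_apply, Pi.smul_apply, smul_eq_mul, Pi.zero_apply] at hsum_t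
    simp only [hsplit, ← mul_assoc, ← Finset.sum_mul, hsum_t, zero_mul]
  have hcp0 := tendsto_nhds_unique (tendsto_finsetSum s hlim)
    (tendsto_const_nhds.congr fun t => (hzero t).symm)
  exact hcp (by simpa [hps] using hcp0)

/-! ### Finite mixing measures -/

section MixingMeasure

variable {ι κ α : Type*} [Fintype ι] [Fintype κ]

/-- The finite signed measure `∑ i, w i • δ_{x i}`, encoded by the mass it gives to each point,
so that repeated atoms are merged. -/
noncomputable def mixingMeasure (w : ι → ℝ) (x : ι → α) : α →₀ ℝ :=
  ∑ i, Finsupp.single (x i) (w i)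

lemma mixingMeasure_apply [DecidableEq α] (w : ι → ℝ) (x : ι → α) (a : α) :
    mixingMeasure w x a = ∑ i with x i = a, w i := by
  simp [mixingMeasure, Finsupp.single_apply, Finset.sum_filter]

lemma mixingMeasure_apply_of_injective {x : ι → α} (hx : Function.Injective x) (w : ι → ℝ)
    (i : ι) : mixingMeasure w x (x i) = w i := by
  classical
  simp [mixingMeasure, Finsupp.single_apply, hx.eq_iff]

lemma mixingMeasure_apply_pos {w : ι → ℝ} (hw : ∀ i, 0 < w i) (x : ι → α) (i : ι) :
    0 < mixingMeasure w x (x i) := by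
  classical
  rw [mixingMeasure_apply]
  exact Finset.sum_pos (fun i _ => hw i) ⟨i, by simp⟩

lemma mixingMeasure_apply_of_notMem_range {x : ι → α} {a : α} (ha : a ∉ Set.range x)
    (w : ι → ℝ) : mixingMeasure w x a = 0 := by
  classical
  rw [mixingMeasure_apply, Finset.filter_false_of_mem (by simpa using ha), Finset.sum_empty]

lemma mem_range_of_mixingMeasure_eq {w : ι → ℝ} {x : ι → α} {v : κ → ℝ} {y : κ → α}
    (hw : ∀ i, 0 < w i) (h : mixingMeasure w x = mixingMeasure v y) (i : ι) :
    x i ∈ Set.range y := by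
  by_contra hi
  exact (mixingMeasure_apply_pos hw x i).ne' (h ▸ mixingMeasure_apply_of_notMem_range hi v)

lemma mixingMeasure_eq_of_linearIndepOn {M : Type*} [AddCommGroup M] [Module ℝ M] {f : α → M}
    {s : Set α} (hf : LinearIndepOn ℝ f s) {w : ι → ℝ} {x : ι → α} {v : κ → ℝ} {y : κ → α}
    (hx : ∀ i, x i ∈ s) (hy : ∀ j, y j ∈ s)
    (h : ∑ i, w i • f (x i) = ∑ j, v j • f (y j)) :
    mixingMeasure w x = mixingMeasure v y := by
  refine linearIndepOn_iffₛ.1 hf _ ?_ _ ?_ (by simpa [mixingMeasure] using h)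
  · exact Submodule.sum_mem _ fun i _ => Finsupp.single_mem_supported ℝ _ (hx i)
  · exact Submodule.sum_mem _ fun j _ => Finsupp.single_mem_supported ℝ _ (hy j)

end MixingMeasure

/-! ### Finiteness of `rbar` -/

lemma hasSum_exp_quadratic (q₁ q₂ t : ℝ) :
    HasSum (fun s : ℕ => ∑ n ∈ (Finset.range (s + 1) ×ˢ Finset.range (s + 1)).filter
        (fun n => n.1 + 2 * n.2 = s),
        t ^ s * (q₁ ^ n.1 * q₂ ^ n.2 / ((n.1.factorial : ℝ) * (n.2.factorial : ℝ))))
      (Real.exp (q₂ * t ^ 2 + q₁ * t)) := by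
  have hlin := NormedSpace.expSeries_div_hasSum_exp (q₁ * t)
  have hquad := NormedSpace.expSeries_div_hasSum_exp (q₂ * t ^ 2)
  have hmul := hlin.mul hquad (summable_mul_of_summable_norm hlin.summable.norm hquad.summable.norm)
  rw [← Real.exp_eq_exp_ℝ, ← Real.exp_add, add_comm (q₁ * t)] at hmul
  refine (hmul.tsum_fiberwise fun n => n.1 + 2 * n.2).congr_fun fun s => ?_
  have hfiber : (fun n : ℕ × ℕ => n.1 + 2 * n.2) ⁻¹' {s} =
      ((Finset.range (s + 1) ×ˢ Finset.range (s + 1)).filter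
        (fun n => n.1 + 2 * n.2 = s) : Finset (ℕ × ℕ)) := by
    ext n
    simp
    omega
  rw [hfiber, Finset.tsum_subtype' _ fun n : ℕ × ℕ =>
    (q₁ * t) ^ n.1 / (n.1.factorial : ℝ) * ((q₂ * t ^ 2) ^ n.2 / (n.2.factorial : ℝ))]
  refine Finset.sum_congr rfl fun n hn => ?_
  rw [← (Finset.mem_filter.1 hn).2]
  ring

lemma hasSum_barEq (m : ℕ) (p q₁ q₂ : Fin m → ℝ) (t : ℝ) :
    HasSum (fun s => t ^ s * barEq m p q₁ q₂ s)
      (∑ l, p l ^ 2 * Real.exp (q₂ l * t ^ 2 + q₁ l * t)) := by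
  refine (hasSum_sum fun l (_ : l ∈ Finset.univ) =>
    (hasSum_exp_quadratic (q₁ l) (q₂ l) t).mul_left (p l ^ 2)).congr_fun fun s => ?_
  simp only [barEq, Finset.mul_sum]
  refine Finset.sum_congr rfl fun l _ => Finset.sum_congr rfl fun n _ => ?_
  ring

lemma exists_barEq_ne_zero {m : ℕ} {p q₁ q₂ : Fin m → ℝ} (hp : ∀ l, p l ≠ 0)
    (hq : ∃ l, q₁ l ≠ 0) : ∃ s, barEq m p q₁ q₂ (s + 1) ≠ 0 := by
  by_contra! hzero
  obtain ⟨l, hl⟩ := hq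
  have hconst : ∀ t : ℝ, ∑ l, p l ^ 2 * Real.exp (q₂ l * t ^ 2 + q₁ l * t) =
      barEq m p q₁ q₂ 0 := fun t => by
    refine (hasSum_barEq m p q₁ q₂ t).unique ?_
    simpa [hzero] using hasSum_single (f := fun s => t ^ s * barEq m p q₁ q₂ s) 0
      (fun s hs => by obtain ⟨s, rfl⟩ := Nat.exists_eq_succ_of_ne_zero hs; simp [hzero])
  have hmix : mixingMeasure (fun l => p l ^ 2) (fun l => (q₂ l, q₁ l)) =
      mixingMeasure (fun _ : Unit => barEq m p q₁ q₂ 0) (fun _ => 0) := by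
    refine mixingMeasure_eq_of_linearIndepOn (linearIndependent_exp_quadratic.linearIndepOn _)
      (fun _ => Set.mem_univ _) (fun _ => Set.mem_univ _) (funext fun t => ?_)
    simp [hconst]
  obtain ⟨_, h⟩ := mem_range_of_mixingMeasure_eq (fun l => sq_pos_of_ne_zero (hp l)) hmix l
  exact hl (congrArg Prod.snd h).symm

lemma exists_forall_mem_span_image_Iio {R M : Type*} [Semiring R] [AddCommMonoid M] [Module R M]
    [IsNoetherian R M] (f : ℕ → M) : ∃ N, ∀ n, f n ∈ Submodule.span R (f '' Set.Iio N) := by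
  let I : ℕ →o Submodule R M := ⟨fun N => Submodule.span R (f '' Set.Iio N), fun _ _ h =>
    Submodule.span_mono (Set.image_mono (Set.Iio_subset_Iio h))⟩
  obtain ⟨N, hN⟩ := monotone_stabilizes_iff_noetherian.2 inferInstance I
  refine ⟨N, fun n => ?_⟩
  have hn : f n ∈ I (max N (n + 1)) := Submodule.subset_span ⟨n, by simp, rfl⟩
  rwa [← hN _ (le_max_left _ _)] at hn

/-- The polynomial in the unknowns `p = X (·, 0)`, `q₁ = X (·, 1)`, `q₂ = X (·, 2)` whose values
are those of `barEq m p q₁ q₂ s`. -/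
noncomputable def barPoly (m s : ℕ) : MvPolynomial (Fin m × Fin 3) ℝ :=
  ∑ l : Fin m, ∑ n ∈ (Finset.range (s + 1) ×ˢ Finset.range (s + 1)).filter
      (fun n => n.1 + 2 * n.2 = s),
    MvPolynomial.X (l, 0) ^ 2 * MvPolynomial.X (l, 1) ^ n.1 * MvPolynomial.X (l, 2) ^ n.2 *
      MvPolynomial.C (((n.1.factorial : ℝ) * (n.2.factorial : ℝ))⁻¹)

lemma eval_barPoly {m : ℕ} (p q₁ q₂ : Fin m → ℝ) (s : ℕ) :
    MvPolynomial.eval (fun x : Fin m × Fin 3 => ![p x.1, q₁ x.1, q₂ x.1] x.2) (barPoly m s) =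
      barEq m p q₁ q₂ s := by
  simp [barPoly, barEq, div_eq_mul_inv]

lemma exists_not_barSol (m : ℕ) : ∃ r : ℕ, 1 ≤ r ∧ ¬ barSol m r := by
  -- By Hilbert's basis theorem, finitely many of the equations imply all of them.
  obtain ⟨N, hN⟩ := exists_forall_mem_span_image_Iio (R := MvPolynomial (Fin m × Fin 3) ℝ)
    fun s => barPoly m (s + 1)
  refine ⟨N + 1, by omega, ?_⟩
  rintro ⟨p, q₁, q₂, hp, hq, hsol⟩
  obtain ⟨s, hs⟩ := exists_barEq_ne_zero (q₂ := q₂) hp hq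
  let φ := MvPolynomial.eval fun x : Fin m × Fin 3 => ![p x.1, q₁ x.1, q₂ x.1] x.2
  have hker : Ideal.span ((fun s => barPoly m (s + 1)) '' Set.Iio N) ≤ RingHom.ker φ := by
    refine Ideal.span_le.2 ?_
    rintro _ ⟨i, hi : i < N, rfl⟩
    exact (eval_barPoly p q₁ q₂ _).trans (hsol _ (by omega) (by omega))
  exact hs ((eval_barPoly p q₁ q₂ _).symm.trans (hker (hN s)))

lemma rbar_pos (m : ℕ) : 0 < rbar m :=
  (Nat.sInf_mem (s := {r : ℕ | 1 ≤ r ∧ ¬ barSol m r}) (exists_not_barSol m)).1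

/-! ### Identifiability of Gaussian components -/

section SymmetricMatrix

variable {n R : Type*} [Fintype n]

lemma dotProduct_mulVec_comm_of_isSymm [CommSemiring R] {M : Matrix n n R} (hM : M.IsSymm)
    (x y : n → R) : x ⬝ᵥ (M *ᵥ y) = y ⬝ᵥ (M *ᵥ x) := by
  rw [← dotProduct_transpose_mulVec, hM.eq]

lemma ext_of_dotProduct_mulVec_self [CommRing R] [IsDomain R] [NeZero (2 : R)] {M N : Matrix n n R}
    (hM : M.IsSymm) (hN : N.IsSymm) (h : ∀ x, x ⬝ᵥ (M *ᵥ x) = x ⬝ᵥ (N *ᵥ x)) : M = N := by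
  classical
  have hbilin : ∀ x y, x ⬝ᵥ (M *ᵥ y) = x ⬝ᵥ (N *ᵥ y) := by
    intro x y
    have hsum := h (x + y)
    simp only [mulVec_add, add_dotProduct, dotProduct_add,
      dotProduct_mulVec_comm_of_isSymm hM y x, dotProduct_mulVec_comm_of_isSymm hN y x] at hsum
    refine mul_left_cancel₀ (two_ne_zero (α := R)) ?_
    linear_combination hsum - h x - h y
  ext i j
  simpa using hbilin (Pi.single i 1) (Pi.single j 1)

end SymmetricMatrix

lemma exists_injective_eval_of_analyticOnNhd {κ E F : Type*} [Countable κ]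
    [NormedAddCommGroup E] [NormedSpace ℝ E] [CompleteSpace E]
    [NormedAddCommGroup F] [NormedSpace ℝ F] {f : κ → E → F}
    (hf : ∀ i, AnalyticOnNhd ℝ (f i) Set.univ) (hinj : Function.Injective f) :
    ∃ z, Function.Injective fun i => f i z := by
  have hopen : ∀ ij : {ij : κ × κ // ij.1 ≠ ij.2}, IsOpen {z | f ij.1.1 z ≠ f ij.1.2 z} :=
    fun ij => isOpen_ne_fun (continuousOn_univ.1 (hf _).continuousOn)
      (continuousOn_univ.1 (hf _).continuousOn)
  have hdense : ∀ ij : {ij : κ × κ // ij.1 ≠ ij.2}, Dense {z | f ij.1.1 z ≠ f ij.1.2 z} := by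
    rintro ⟨⟨i, j⟩, hij⟩
    refine dense_iff_closure_eq.2 (Set.eq_univ_of_forall fun z =>
      mem_closure_iff_frequently.2 fun h => ?_)
    exact hij (hinj ((hf i).eq_of_eventuallyEq (hf j) (h.mono fun _ => not_not.1)))
  obtain ⟨z, hz⟩ := (dense_iInter_of_isOpen hopen hdense).nonempty
  refine ⟨z, fun i j hij => ?_⟩
  by_contra hne
  exact Set.mem_iInter.1 hz ⟨(i, j), hne⟩ hij

/-- The parameters of non-degenerate Gaussian components. Over `ℝ`, `Matrix.PosDef` includes the
symmetry of the covariance. -/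
structure IsRegularParam {d : ℕ} (θ : Param d) : Prop where
  posDef : θ.2.1.PosDef
  variance_pos : 0 < θ.2.2.2.2

lemma Fcomp_pos {d : ℕ} {θ : Param d} (hθ : IsRegularParam θ) (x : Fin d → ℝ) (y : ℝ) :
    0 < Fcomp θ x y := by
  have hdet := hθ.posDef.det_pos
  have hν := hθ.variance_pos
  unfold Fcomp gaussd gauss1
  positivity

/-- The coefficients of `t ^ 2` and of `t` in the exponent of `Fcomp θ` along the line `t • z`. -/
noncomputable def expCoeffs {d : ℕ} (θ : Param d) (z : (Fin d → ℝ) × ℝ) : ℝ × ℝ :=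
  (-(1 / 2) * (z.1 ⬝ᵥ (θ.2.1⁻¹ *ᵥ z.1)) - (z.2 - θ.2.2.1 ⬝ᵥ z.1) ^ 2 / (2 * θ.2.2.2.2),
    z.1 ⬝ᵥ (θ.2.1⁻¹ *ᵥ θ.1) + (z.2 - θ.2.2.1 ⬝ᵥ z.1) * θ.2.2.2.1 / θ.2.2.2.2)

lemma Fcomp_smul {d : ℕ} {θ : Param d} (hθ : IsRegularParam θ) (z : (Fin d → ℝ) × ℝ) (t : ℝ) :
    Fcomp θ (t • z).1 (t • z).2 =
      Fcomp θ 0 0 * Real.exp ((expCoeffs θ z).1 * t ^ 2 + (expCoeffs θ z).2 * t) := by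
  have hν := hθ.variance_pos.ne'
  have hinv : θ.2.1⁻¹.IsSymm := (isHermitian_iff_isSymm.1 hθ.posDef.isHermitian).inv
  have hexp : ∀ A B u v u₀ v₀ q : ℝ, u + v = u₀ + v₀ + q →
      A * Real.exp u * (B * Real.exp v) = A * Real.exp u₀ * (B * Real.exp v₀) * Real.exp q := by
    intro A B u v u₀ v₀ q h
    have hexp_add : Real.exp u * Real.exp v = Real.exp u₀ * Real.exp v₀ * Real.exp q := by
      rw [← Real.exp_add, ← Real.exp_add, ← Real.exp_add, h]
    linear_combination A * B * hexp_add
  refine hexp _ _ _ _ _ _ _ ?_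
  simp only [expCoeffs, Prod.smul_fst, Prod.smul_snd, mulVec_sub, sub_dotProduct, dotProduct_sub,
    mulVec_smul, smul_dotProduct, dotProduct_smul, smul_eq_mul, mulVec_zero, dotProduct_zero,
    zero_dotProduct, dotProduct_mulVec_comm_of_isSymm hinv θ.1 z.1]
  field_simp
  ring

lemma injOn_expCoeffs (d : ℕ) : Set.InjOn expCoeffs {θ : Param d | IsRegularParam θ} := by
  rintro ⟨c, Γ, a, b, ν⟩ ⟨hΓ, hν⟩ ⟨c', Γ', a', b', ν'⟩ ⟨hΓ', hν'⟩ h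
  have hquad : ∀ x y, (expCoeffs (c, Γ, a, b, ν) (x, y)).1 =
      (expCoeffs (c', Γ', a', b', ν') (x, y)).1 := fun x y => by rw [h]
  have hlin : ∀ x y, (expCoeffs (c, Γ, a, b, ν) (x, y)).2 =
      (expCoeffs (c', Γ', a', b', ν') (x, y)).2 := fun x y => by rw [h]
  simp only [expCoeffs] at hquad hlin hν hν' hΓ hΓ'
  obtain rfl : ν = ν' := by simpa using hquad 0 1
  obtain rfl : a = a' := by
    refine dotProduct_eq _ _ fun x => ?_
    have hplus := hquad x 1
    have hminus := hquad x (-1)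
    field_simp at hplus hminus
    linarith
  obtain rfl : b = b' := by simpa [div_left_inj' hν.ne'] using hlin 0 1
  have hinv : Γ⁻¹ = Γ'⁻¹ := by
    refine ext_of_dotProduct_mulVec_self (isHermitian_iff_isSymm.1 hΓ.inv.isHermitian)
      (isHermitian_iff_isSymm.1 hΓ'.inv.isHermitian) fun x => ?_
    linarith [hquad x 0]
  obtain rfl : Γ = Γ' := inv_inj hinv hΓ.det_pos.ne'.isUnit
  obtain rfl : c = c' := by
    refine mulVec_injective_of_isUnit hΓ.inv.isUnit (dotProduct_eq _ _ fun x => ?_)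
    rw [dotProduct_comm, dotProduct_comm _ x]
    linarith [hlin x 0]
  rfl

lemma analyticOnNhd_expCoeffs {d : ℕ} (θ : Param d) :
    AnalyticOnNhd ℝ (expCoeffs θ) Set.univ := by
  intro z _
  have hfst : ∀ i, AnalyticAt ℝ (fun z : (Fin d → ℝ) × ℝ => z.1 i) z := fun i =>
    ((ContinuousLinearMap.proj (R := ℝ) (φ := fun _ : Fin d => ℝ) i).comp
      (ContinuousLinearMap.fst ℝ (Fin d → ℝ) ℝ)).analyticAt z
  have hsnd : AnalyticAt ℝ (fun z : (Fin d → ℝ) × ℝ => z.2) z := analyticAt_snd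
  unfold expCoeffs
  simp only [dotProduct, mulVec, div_eq_mul_inv]
  fun_prop

lemma linearIndepOn_Fcomp (d : ℕ) :
    LinearIndepOn ℝ (fun (θ : Param d) (z : (Fin d → ℝ) × ℝ) => Fcomp θ z.1 z.2)
      {θ | IsRegularParam θ} := by
  refine linearIndepOn_iff_linearIndepOn_finset.2 fun s hs => linearIndepOn_finset_iff.2 ?_
  intro c hc
  -- Along a line whose direction separates the exponents, the components become distinct
  -- quadratic exponentials.
  obtain ⟨z, hz⟩ := exists_injective_eval_of_analyticOnNhd (f := fun θ : s => expCoeffs θ.1)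
    (fun θ => analyticOnNhd_expCoeffs θ.1) ((injOn_expCoeffs d).mono hs).injective
  have hline : ∑ θ : s, (c θ * Fcomp θ.1 0 0) •
      (fun t : ℝ => Real.exp ((expCoeffs θ.1 z).1 * t ^ 2 + (expCoeffs θ.1 z).2 * t)) = 0 := by
    funext t
    have hct := congrFun hc (t • z)
    rw [← s.sum_coe_sort, Finset.sum_apply] at hct
    rw [Finset.sum_apply]
    refine (Finset.sum_congr rfl fun θ _ => ?_).trans hct
    simp only [Pi.smul_apply, smul_eq_mul, Fcomp_smul (hs θ.2), mul_assoc]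
  intro θ hθ
  have hzero := Fintype.linearIndependent_iff.1 (linearIndependent_exp_quadratic.comp _ hz) _
    hline ⟨θ, hθ⟩
  exact (mul_eq_zero.1 hzero).resolve_right (Fcomp_pos (hs hθ) 0 0).ne'

/-! ### Continuity and integrability of the component densities -/

lemma continuous_Fcomp {d : ℕ} (θ : Param d) :
    Continuous (fun z : (Fin d → ℝ) × ℝ => Fcomp θ z.1 z.2) := by
  unfold Fcomp gaussd gauss1
  simp only [dotProduct, mulVec, div_eq_mul_inv]
  fun_prop

lemma continuousAt_gauss1 {y b ν : ℝ} (hν : 0 < ν) :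
    ContinuousAt (fun q : ℝ × ℝ => gauss1 y q.1 q.2) (b, ν) := by
  have hscale : ContinuousAt (fun q : ℝ × ℝ => (2 * Real.pi * q.2) ^ (-(1 : ℝ) / 2)) (b, ν) :=
    ContinuousAt.rpow_const (by fun_prop) (Or.inl (by positivity))
  have hexponent : ContinuousAt (fun q : ℝ × ℝ => -((y - q.1) ^ 2) / (2 * q.2)) (b, ν) :=
    ContinuousAt.div (by fun_prop) (by fun_prop) (by positivity)
  exact hscale.mul hexponent.rexp

lemma continuousAt_gaussd {d : ℕ} {x c : Fin d → ℝ} {Γ : Matrix (Fin d) (Fin d) ℝ}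
    (hΓ : Γ.det ≠ 0) :
    ContinuousAt (fun q : (Fin d → ℝ) × Matrix (Fin d) (Fin d) ℝ => gaussd d x q.1 q.2)
      (c, Γ) := by
  have hdet : ContinuousAt (fun q : (Fin d → ℝ) × Matrix (Fin d) (Fin d) ℝ =>
      q.2.det ^ (-(1 : ℝ) / 2)) (c, Γ) :=
    ContinuousAt.rpow_const continuous_snd.matrix_det.continuousAt (Or.inl hΓ)
  have hinv : ContinuousAt (Inv.inv : Matrix (Fin d) (Fin d) ℝ → _) Γ :=
    continuousAt_matrix_inv Γ (by rw [Ring.inverse_eq_inv']; exact continuousAt_inv₀ hΓ)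
  have hform : Continuous fun q : (Fin d → ℝ) × Matrix (Fin d) (Fin d) ℝ =>
      (x - q.1) ⬝ᵥ (q.2 *ᵥ (x - q.1)) := by
    have hsub : Continuous fun q : (Fin d → ℝ) × Matrix (Fin d) (Fin d) ℝ => x - q.1 := by
      fun_prop
    exact hsub.dotProduct (continuous_snd.matrix_mulVec hsub)
  have hquad : ContinuousAt (fun q : (Fin d → ℝ) × Matrix (Fin d) (Fin d) ℝ =>
      (x - q.1) ⬝ᵥ (q.2⁻¹ *ᵥ (x - q.1))) (c, Γ) :=
    hform.continuousAt.comp (continuousAt_fst.prodMk (hinv.comp continuousAt_snd))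
  exact (hdet.const_mul _).mul (hquad.const_mul _).rexp

lemma IsRegularParam.continuousAt_Fcomp {d : ℕ} {θ : Param d} (hθ : IsRegularParam θ)
    (x : Fin d → ℝ) (y : ℝ) : ContinuousAt (fun η : Param d => Fcomp η x y) θ := by
  have hmean : Continuous fun η : Param d => (η.2.2.1 ⬝ᵥ x + η.2.2.2.1, η.2.2.2.2) := by
    simp only [dotProduct]
    fun_prop
  have hloc : Continuous fun η : Param d => (η.1, η.2.1) := by fun_prop
  exact ((continuousAt_gaussd (c := θ.1) hθ.posDef.det_pos.ne').comp (x := θ) hloc.continuousAt).mul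
    ((continuousAt_gauss1 hθ.variance_pos).comp (x := θ) hmean.continuousAt)

open scoped MatrixOrder in
lemma exists_pos_mul_dotProduct_self_le {n : Type*} [Fintype n] {M : Matrix n n ℝ}
    (hM : M.PosDef) : ∃ r > 0, ∀ x : n → ℝ, r * (x ⬝ᵥ x) ≤ x ⬝ᵥ (M *ᵥ x) := by
  classical
  cases isEmpty_or_nonempty n
  · exact ⟨1, one_pos, by simp⟩
  obtain ⟨r, hr, hrM⟩ := (CFC.exists_pos_algebraMap_le_iff (a := M) hM.isHermitian).2
    fun x hx => hM.isStrictlyPositive.spectrum_pos hx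
  refine ⟨r, hr, fun x => ?_⟩
  have hdiff := (Matrix.le_iff.1 hrM).dotProduct_mulVec_nonneg x
  simpa [sub_mulVec, Algebra.algebraMap_eq_smul_one, smul_mulVec] using hdiff

lemma integrable_exp_neg_mul_dotProduct_self {n : Type*} [Fintype n] {r : ℝ} (hr : 0 < r) :
    Integrable (fun x : n → ℝ => Real.exp (-r * (x ⬝ᵥ x))) := by
  refine (Integrable.fintype_prod (f := fun _ (v : ℝ) => Real.exp (-r * v ^ 2))
    fun _ : n => integrable_exp_neg_mul_sq hr).congr (.of_forall fun x => ?_)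
  simp [← Real.exp_sum, dotProduct, Finset.mul_sum, sq]

lemma integrable_gaussd {d : ℕ} (c : Fin d → ℝ) {Γ : Matrix (Fin d) (Fin d) ℝ} (hΓ : Γ.PosDef) :
    Integrable (fun x => gaussd d x c Γ) := by
  obtain ⟨r, hr, hle⟩ := exists_pos_mul_dotProduct_self_le hΓ.inv
  have hcentred : Integrable (fun x : Fin d → ℝ => Real.exp (-(1 / 2) * (x ⬝ᵥ (Γ⁻¹ *ᵥ x)))) := by
    refine (integrable_exp_neg_mul_dotProduct_self (half_pos hr)).mono' ?_
      (.of_forall fun x => ?_)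
    · simp only [dotProduct, mulVec]
      fun_prop
    · rw [Real.norm_eq_abs, Real.abs_exp, Real.exp_le_exp]
      linarith [hle x]
  exact (hcentred.comp_sub_right c).const_mul _

lemma gauss1_eq_gaussianPDFReal (y b : ℝ) (ν : NNReal) :
    gauss1 y b ν = ProbabilityTheory.gaussianPDFReal b ν y := by
  simp only [gauss1, ProbabilityTheory.gaussianPDFReal, Real.sqrt_eq_rpow, neg_div,
    Real.rpow_neg (show 0 ≤ 2 * Real.pi * (ν : ℝ) by positivity)]

lemma IsRegularParam.integrable_Fcomp {d : ℕ} {θ : Param d} (hθ : IsRegularParam θ) :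
    Integrable (fun z : (Fin d → ℝ) × ℝ => Fcomp θ z.1 z.2) := by
  rw [Measure.volume_eq_prod, integrable_prod_iff (continuous_Fcomp θ).aestronglyMeasurable]
  simp only [Real.norm_of_nonneg (Fcomp_pos hθ _ _).le]
  obtain ⟨c, Γ, a, b, ν⟩ := θ
  lift ν to NNReal using hθ.variance_pos.le
  have hν : ν ≠ 0 := NNReal.coe_ne_zero.1 hθ.variance_pos.ne'
  simp only [Fcomp, gauss1_eq_gaussianPDFReal, integral_const_mul,
    ProbabilityTheory.integral_gaussianPDFReal_eq_one _ hν, mul_one]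
  exact ⟨.of_forall fun x => (ProbabilityTheory.integrable_gaussianPDFReal _ ν).const_mul _,
    integrable_gaussd c hθ.posDef⟩

/-! ### Mixture densities -/

/-- The density `p_G` of the mixing measure `G = ∑ i, w i • δ_{θ i}`. -/
noncomputable def mixtureDensity {d m : ℕ} (w : Fin m → ℝ) (θ : Fin m → Param d)
    (z : (Fin d → ℝ) × ℝ) : ℝ :=
  ∑ i, w i * Fcomp (θ i) z.1 z.2

section MixtureDensity

variable {d m n : ℕ} {w : Fin m → ℝ} {θ : Fin m → Param d} {v : Fin n → ℝ} {η : Fin n → Param d}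

lemma continuous_mixtureDensity (w : Fin m → ℝ) (θ : Fin m → Param d) :
    Continuous (mixtureDensity w θ) :=
  continuous_finsetSum _ fun i _ => continuous_const.mul (continuous_Fcomp (θ i))

lemma integrable_mixtureDensity (w : Fin m → ℝ) (hθ : ∀ i, IsRegularParam (θ i)) :
    Integrable (mixtureDensity w θ) :=
  integrable_finsetSum _ fun i _ => (hθ i).integrable_Fcomp.const_mul (w i)

lemma continuousAt_mixtureDensity (w : Fin m → ℝ) (hθ : ∀ i, IsRegularParam (θ i))
    (z : (Fin d → ℝ) × ℝ) :
    ContinuousAt (fun x : (Fin m → ℝ) × (Fin m → Param d) => mixtureDensity x.1 x.2 z)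
      (w, θ) := by
  have hatom : ∀ i, Continuous fun x : (Fin m → ℝ) × (Fin m → Param d) => x.2 i := by fun_prop
  have hFcomp : ∀ i, ContinuousAt
      (fun x : (Fin m → ℝ) × (Fin m → Param d) => Fcomp (x.2 i) z.1 z.2) (w, θ) := fun i =>
    ((hθ i).continuousAt_Fcomp z.1 z.2).tendsto.comp ((hatom i).tendsto (w, θ))
  unfold mixtureDensity
  fun_prop

lemma mixingMeasure_eq_of_mixtureDensity_eq (hθ : ∀ i, IsRegularParam (θ i))
    (hη : ∀ j, IsRegularParam (η j)) (h : mixtureDensity w θ = mixtureDensity v η) :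
    mixingMeasure w θ = mixingMeasure v η := by
  refine mixingMeasure_eq_of_linearIndepOn (linearIndepOn_Fcomp d) hθ hη ?_
  ext z
  simpa [mixtureDensity] using congrFun h z

lemma TV_nonneg (p q : (Fin d → ℝ) × ℝ → ℝ) : 0 ≤ TV p q :=
  mul_nonneg (by norm_num) (integral_nonneg fun _ => abs_nonneg _)

end MixtureDensity

lemma eq_ae_of_tendsto_integral_norm_sub {α ι E : Type*} [MeasurableSpace α] {μ : Measure α}
    [NormedAddCommGroup E] {l : Filter ι} [l.NeBot] [l.IsCountablyGenerated]
    {f : ι → α → E} {g h : α → E} (hf : ∀ i, AEStronglyMeasurable (f i) μ)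
    (hg : AEStronglyMeasurable g μ) (hfg : ∀ᶠ i in l, Integrable (fun x => f i x - g x) μ)
    (hlim : ∀ x, Tendsto (fun i => f i x) l (𝓝 (h x)))
    (hint : Tendsto (fun i => ∫ x, ‖f i x - g x‖ ∂μ) l (𝓝 0)) : h =ᵐ[μ] g := by
  have hL1 : Tendsto (fun i => eLpNorm (f i - g) 1 μ) l (𝓝 0) := by
    rw [← ENNReal.ofReal_zero]
    refine ((ENNReal.continuous_ofReal.tendsto 0).comp hint).congr' (hfg.mono fun i hi => ?_)
    simp only [Function.comp_apply, eLpNorm_one_eq_lintegral_enorm]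
    exact ofReal_integral_norm_eq_lintegral_enorm hi
  obtain ⟨ns, hns, hae⟩ :=
    (tendstoInMeasure_of_tendsto_eLpNorm one_ne_zero hf hg hL1).exists_seq_tendsto_ae'
  exact hae.mono fun x hx => tendsto_nhds_unique ((hlim x).comp hns) hx

lemma mixtureDensity_eq_of_tendsto_TV_zero {d m : ℕ} {w : Fin m → ℝ} {θ : Fin m → Param d}
    {l : Filter ((Fin m → ℝ) × (Fin m → Param d))} [l.NeBot] [l.IsCountablyGenerated]
    {q : (Fin d → ℝ) × ℝ → ℝ} (hl : l ≤ 𝓝 (w, θ)) (hθ : ∀ i, IsRegularParam (θ i))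
    (hreg : ∀ᶠ x in l, ∀ i, IsRegularParam (x.2 i)) (hq : Continuous q) (hqi : Integrable q)
    (hTV : Tendsto (fun x => TV (mixtureDensity x.1 x.2) q) l (𝓝 0)) :
    mixtureDensity w θ = q := by
  have hlim : ∀ z, Tendsto (fun x : (Fin m → ℝ) × (Fin m → Param d) => mixtureDensity x.1 x.2 z) l
      (𝓝 (mixtureDensity w θ z)) := fun z =>
    (continuousAt_mixtureDensity w hθ z).tendsto.mono_left hl
  have hL1 : Tendsto (fun x => ∫ z, ‖mixtureDensity x.1 x.2 z - q z‖) l (𝓝 0) := by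
    simpa [TV] using hTV.const_mul 2
  have hae : mixtureDensity w θ =ᵐ[volume] q := eq_ae_of_tendsto_integral_norm_sub
    (f := fun x : (Fin m → ℝ) × (Fin m → Param d) => mixtureDensity x.1 x.2)
    (fun x => (continuous_mixtureDensity x.1 x.2).aestronglyMeasurable) hq.aestronglyMeasurable
    (hreg.mono fun x hx => (integrable_mixtureDensity x.1 hx).sub hqi) hlim hL1
  exact ((continuous_mixtureDensity w θ).ae_eq_iff_eq volume hq).1 hae

/-! ### The Voronoi loss near the true mixing measure -/

lemma vnorm_eq_zero {d : ℕ} {v : Fin d → ℝ} : vnorm v = 0 ↔ v = 0 := by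
  rw [vnorm, Real.sqrt_eq_zero (by positivity),
    Finset.sum_eq_zero_iff_of_nonneg fun i _ => sq_nonneg (v i)]
  simp [funext_iff]

lemma mnorm_eq_zero {d : ℕ} {M : Matrix (Fin d) (Fin d) ℝ} : mnorm M = 0 ↔ M = 0 := by
  rw [mnorm, Real.sqrt_eq_zero (by positivity),
    Finset.sum_eq_zero_iff_of_nonneg fun i _ => by positivity]
  simp [Finset.sum_eq_zero_iff_of_nonneg, sq_nonneg, ← Matrix.ext_iff]

lemma pdist_eq_zero {d : ℕ} {θ η : Param d} : pdist θ η = 0 ↔ θ = η := by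
  rw [pdist, Real.sqrt_eq_zero (by positivity)]
  repeat rw [add_eq_zero_iff_of_nonneg (by positivity) (by positivity)]
  simp [vnorm_eq_zero, mnorm_eq_zero, sub_eq_zero, Prod.ext_iff, and_assoc]

lemma continuous_vnorm {d : ℕ} : Continuous (vnorm : (Fin d → ℝ) → ℝ) := by
  unfold vnorm
  fun_prop

lemma continuous_mnorm {d : ℕ} : Continuous (mnorm : Matrix (Fin d) (Fin d) ℝ → ℝ) := by
  unfold mnorm
  exact Real.continuous_sqrt.comp (continuous_finsetSum _ fun i _ =>
    continuous_finsetSum _ fun j _ => (continuous_id.matrix_elem i j).pow 2)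

lemma continuous_pdist_left {d : ℕ} (η : Param d) : Continuous (pdist · η) := by
  have hv := continuous_vnorm (d := d)
  have hm := continuous_mnorm (d := d)
  unfold pdist
  fun_prop

lemma mem_cell_iff_of_forall_pdist_lt {d k0 m : ℕ} {θ0 : Fin k0 → Param d} {θ : Fin m → Param d}
    {i : Fin m} {j : Fin k0} (h : ∀ l ≠ j, pdist (θ i) (θ0 j) < pdist (θ i) (θ0 l))
    (l : Fin k0) : i ∈ cell θ0 θ l ↔ l = j := by
  simp only [cell, Finset.mem_filter, Finset.mem_univ, true_and]
  constructor
  · intro hl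
    by_contra hne
    exact (h l hne).not_ge (hl j (Ne.symm hne))
  · rintro rfl l' hl'
    exact (h l' hl').le

lemma eventually_mem_cell_iff {d k0 m : ℕ} {θ0 : Fin k0 → Param d} (hθ0 : Function.Injective θ0)
    {θ : Fin m → Param d} (hθ : ∀ i, θ i ∈ Set.range θ0) :
    ∀ᶠ η in 𝓝 θ, ∀ j i, i ∈ cell θ0 η j ↔ θ i = θ0 j := by
  choose j hj using hθ
  have hnear : ∀ᶠ η in 𝓝 θ, ∀ i l, l ≠ j i → pdist (η i) (θ0 (j i)) < pdist (η i) (θ0 l) := by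
    simp only [eventually_all]
    intro i l hl
    have hcont : ∀ l', Continuous fun η : Fin m → Param d => pdist (η i) (θ0 l') := fun l' =>
      (continuous_pdist_left (θ0 l')).comp (continuous_apply i)
    refine (hcont (j i)).continuousAt.eventually_lt (hcont l).continuousAt ?_
    rw [← hj i, pdist_eq_zero.2 rfl]
    exact (Real.sqrt_nonneg _).lt_of_ne' (pdist_eq_zero.not.2 (hθ0.ne hl.symm))
  filter_upwards [hnear] with η hη l i
  rw [mem_cell_iff_of_forall_pdist_lt (hη i), ← hj i, hθ0.eq_iff, eq_comm]

/-- The summand of `Dbar` for an atom `θ` in the cell of `η` when that cell holds several atoms;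
`r` is the exponent `rbar` of its cardinality. -/
noncomputable def overfitLoss {d : ℕ} (r : ℕ) (θ η : Param d) : ℝ :=
  vnorm (θ.1 - η.1) ^ (r : ℝ) + mnorm (θ.2.1 - η.2.1) ^ ((r : ℝ) / 2)
    + vnorm (θ.2.2.1 - η.2.2.1) ^ (2 : ℕ) + |θ.2.2.2.1 - η.2.2.2.1| ^ (r : ℝ)
    + |θ.2.2.2.2 - η.2.2.2.2| ^ ((r : ℝ) / 2)

/-- The summand of `Dbar` for an atom `θ` that is alone in the cell of `η`. -/
noncomputable def exactLoss {d : ℕ} (θ η : Param d) : ℝ :=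
  vnorm (θ.1 - η.1) + mnorm (θ.2.1 - η.2.1) + vnorm (θ.2.2.1 - η.2.2.1)
    + |θ.2.2.2.1 - η.2.2.2.1| + |θ.2.2.2.2 - η.2.2.2.2|

/-- The loss `Dbar` with the Voronoi cells replaced by a fixed family `C` of sets of indices. Unlike
`Dbar`, it is continuous in `(w, θ)`. -/
noncomputable def partitionLoss {d k0 m : ℕ} (C : Fin k0 → Finset (Fin m)) (π0 : Fin k0 → ℝ)
    (θ0 : Fin k0 → Param d) (w : Fin m → ℝ) (θ : Fin m → Param d) : ℝ :=
  (∑ j, if 1 < (C j).card then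
      ∑ i ∈ C j, w i * overfitLoss (rbar (C j).card) (θ i) (θ0 j) else 0)
    + (∑ j, if (C j).card = 1 then ∑ i ∈ C j, w i * exactLoss (θ i) (θ0 j) else 0)
    + ∑ j, |(∑ i ∈ C j, w i) - π0 j|

section Loss

variable {d k0 m : ℕ} {π0 : Fin k0 → ℝ} {θ0 : Fin k0 → Param d}

lemma Dbar_eq_partitionLoss (w : Fin m → ℝ) (θ : Fin m → Param d) :
    Dbar π0 θ0 w θ = partitionLoss (cell θ0 θ) π0 θ0 w θ :=
  rfl

lemma overfitLoss_self {r : ℕ} (hr : 0 < r) (θ : Param d) : overfitLoss r θ θ = 0 := by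
  simp [overfitLoss, vnorm_eq_zero.2, mnorm_eq_zero.2, Real.zero_rpow, hr.ne']

lemma exactLoss_self (θ : Param d) : exactLoss θ θ = 0 := by
  simp [exactLoss, vnorm_eq_zero.2, mnorm_eq_zero.2]

lemma continuous_overfitLoss (r : ℕ) (η : Param d) : Continuous (overfitLoss r · η) := by
  have hv := continuous_vnorm (d := d)
  have hm := continuous_mnorm (d := d)
  have hrpow : ∀ {s : ℝ}, 0 ≤ s → Continuous fun u : ℝ => u ^ s := Real.continuous_rpow_const
  have hr := hrpow (Nat.cast_nonneg r)
  have hr2 := hrpow (show 0 ≤ (r : ℝ) / 2 by positivity)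
  unfold overfitLoss
  refine ((((hr.comp ?_).add (hr2.comp ?_)).add (Continuous.pow ?_ 2)).add (hr.comp ?_)).add
    (hr2.comp ?_) <;> fun_prop

lemma continuous_exactLoss (η : Param d) : Continuous (exactLoss · η) := by
  have hv := continuous_vnorm (d := d)
  have hm := continuous_mnorm (d := d)
  unfold exactLoss
  fun_prop

lemma continuous_partitionLoss (C : Fin k0 → Finset (Fin m)) :
    Continuous fun x : (Fin m → ℝ) × (Fin m → Param d) => partitionLoss C π0 θ0 x.1 x.2 := by
  have hover := fun r j => continuous_overfitLoss r (θ0 j)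
  have hexact := fun j => continuous_exactLoss (θ0 j)
  unfold partitionLoss
  refine (Continuous.add (continuous_finsetSum _ fun j _ => ?_)
    (continuous_finsetSum _ fun j _ => ?_)).add (by fun_prop)
  · split_ifs <;> fun_prop
  · split_ifs <;> fun_prop

lemma partitionLoss_eq_zero {C : Fin k0 → Finset (Fin m)} {w : Fin m → ℝ} {θ : Fin m → Param d}
    (hatom : ∀ j, ∀ i ∈ C j, θ i = θ0 j) (hmass : ∀ j, ∑ i ∈ C j, w i = π0 j) :
    partitionLoss C π0 θ0 w θ = 0 := by
  have hover : ∀ j, ∑ i ∈ C j, w i * overfitLoss (rbar (C j).card) (θ i) (θ0 j) = 0 := fun j =>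
    Finset.sum_eq_zero fun i hi => by rw [hatom j i hi, overfitLoss_self (rbar_pos _), mul_zero]
  have hexact : ∀ j, ∑ i ∈ C j, w i * exactLoss (θ i) (θ0 j) = 0 := fun j =>
    Finset.sum_eq_zero fun i hi => by rw [hatom j i hi, exactLoss_self, mul_zero]
  simp [partitionLoss, hover, hexact, hmass]

lemma tendsto_Dbar_zero (hθ0 : Function.Injective θ0) {w : Fin m → ℝ} {θ : Fin m → Param d}
    (hw : ∀ i, 0 < w i) (h : mixingMeasure w θ = mixingMeasure π0 θ0) :
    Tendsto (fun x : (Fin m → ℝ) × (Fin m → Param d) => Dbar π0 θ0 x.1 x.2)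
      (𝓝 (w, θ)) (𝓝 0) := by
  classical
  have hcell := eventually_mem_cell_iff hθ0 (mem_range_of_mixingMeasure_eq hw h)
  have hmass : ∀ j, ∑ i ∈ cell θ0 θ j, w i = π0 j := fun j => by
    rw [← mixingMeasure_apply_of_injective hθ0 π0 j, ← h, mixingMeasure_apply]
    exact Finset.sum_congr (by ext i; simp [hcell.self_of_nhds]) fun _ _ => rfl
  rw [← partitionLoss_eq_zero (fun j i => (hcell.self_of_nhds j i).1) hmass]
  refine ((continuous_partitionLoss (cell θ0 θ)).tendsto (w, θ)).congr' ?_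
  filter_upwards [(continuous_snd.tendsto (w, θ)).eventually hcell] with x hx
  have hconst : cell θ0 x.2 = cell θ0 θ := funext fun j => by
    ext i
    rw [hx, hcell.self_of_nhds]
  rw [Dbar_eq_partitionLoss, hconst]

end Loss

/-! ### Compactness -/

lemma exists_pos_forall_of_isCompact {X : Type*} [TopologicalSpace X] {K : Set X}
    (hK : IsCompact K) {f : X → ℝ} (hf : ∀ x, 0 ≤ f x) {p : X → Prop}
    (h : ∀ x ∈ K, ∀ᶠ y in 𝓝[K] x ⊓ comap f (𝓝 0), p y) :
    ∃ δ > 0, ∀ x ∈ K, f x < δ → p x := by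
  refine hK.induction_on (p := fun s => ∃ δ > 0, ∀ x ∈ s, f x < δ → p x)
    ⟨1, one_pos, by simp⟩ ?_ ?_ ?_
  · exact fun s t hst ⟨δ, hδ, ht⟩ => ⟨δ, hδ, fun x hx => ht x (hst hx)⟩
  · rintro s t ⟨δ, hδ, hs⟩ ⟨δ', hδ', ht⟩
    refine ⟨min δ δ', lt_min hδ hδ', ?_⟩
    rintro x (hx | hx) hfx
    exacts [hs x hx (lt_min_iff.1 hfx).1, ht x hx (lt_min_iff.1 hfx).2]
  · intro x hx
    obtain ⟨⟨t, δ⟩, ⟨ht, hδ⟩, htδ⟩ := ((𝓝[K] x).basis_sets.inf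
      ((Metric.nhds_basis_ball (x := (0 : ℝ))).comap f)).eventually_iff.1 (h x hx)
    exact ⟨t, ht, δ, hδ, fun y hy hfy => htδ ⟨hy, by simpa [abs_of_nonneg (hf y)] using hfy⟩⟩

instance {m n R : Type*} [Countable m] [Countable n] [TopologicalSpace R]
    [FirstCountableTopology R] : FirstCountableTopology (Matrix m n R) :=
  inferInstanceAs (FirstCountableTopology (m → n → R))

section LowerBound

variable {d k0 m : ℕ} {Θ : Set (Param d)} {π0 : Fin k0 → ℝ} {θ0 : Fin k0 → Param d}

lemma eventually_Dbar_lt_of_tendsto_TV_zero {l : Filter ((Fin m → ℝ) × (Fin m → Param d))}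
    [l.IsCountablyGenerated] {w : Fin m → ℝ} {θ : Fin m → Param d} (hl : l ≤ 𝓝 (w, θ))
    (hw : ∀ i, 0 < w i) (hθ : ∀ i, IsRegularParam (θ i))
    (hreg : ∀ᶠ x in l, ∀ i, IsRegularParam (x.2 i)) (hθ0 : ∀ j, IsRegularParam (θ0 j))
    (hθ0inj : Function.Injective θ0)
    (hTV : Tendsto (fun x => TV (mixtureDensity x.1 x.2) (mixtureDensity π0 θ0)) l (𝓝 0))
    {ε : ℝ} (hε : 0 < ε) : ∀ᶠ x in l, Dbar π0 θ0 x.1 x.2 < ε := by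
  obtain rfl | _ := l.eq_or_neBot
  · exact eventually_bot
  have hdensity : mixtureDensity w θ = mixtureDensity π0 θ0 :=
    mixtureDensity_eq_of_tendsto_TV_zero hl hθ hreg (continuous_mixtureDensity π0 θ0)
      (integrable_mixtureDensity π0 hθ0) hTV
  have hmix := mixingMeasure_eq_of_mixtureDensity_eq hθ hθ0 hdensity
  exact ((tendsto_Dbar_zero hθ0inj hw hmix).mono_left hl).eventually_lt_const hε

lemma exists_pos_le_TV_of_lt_Dbar (m : ℕ) (hΘc : IsCompact Θ) (hΘ : ∀ θ ∈ Θ, IsRegularParam θ)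
    {β : ℝ} (hβ : 0 < β) (hθ0 : ∀ j, IsRegularParam (θ0 j)) (hθ0inj : Function.Injective θ0)
    {ε : ℝ} (hε : 0 < ε) :
    ∃ δ > 0, ∀ (w : Fin m → ℝ) (θ : Fin m → Param d), (∀ i, w i ∈ Set.Icc β 1) →
      (∀ i, θ i ∈ Θ) → ε < Dbar π0 θ0 w θ →
      δ ≤ TV (mixtureDensity w θ) (mixtureDensity π0 θ0) := by
  let K : Set ((Fin m → ℝ) × (Fin m → Param d)) :=
    (Set.univ.pi fun _ => Set.Icc β 1) ×ˢ (Set.univ.pi fun _ => Θ)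
  let f : (Fin m → ℝ) × (Fin m → Param d) → ℝ :=
    fun x => TV (mixtureDensity x.1 x.2) (mixtureDensity π0 θ0)
  have hK : IsCompact K :=
    (isCompact_univ_pi fun _ => isCompact_Icc).prod (isCompact_univ_pi fun _ => hΘc)
  have hlocal : ∀ x ∈ K, ∀ᶠ y in 𝓝[K] x ⊓ comap f (𝓝 0), Dbar π0 θ0 y.1 y.2 < ε := by
    rintro ⟨w, θ⟩ ⟨hw, hθ⟩
    have hreg : ∀ᶠ x in 𝓝[K] (w, θ), ∀ i, IsRegularParam (x.2 i) :=
      eventually_mem_nhdsWithin.mono fun x hx i => hΘ _ (hx.2 i trivial)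
    exact eventually_Dbar_lt_of_tendsto_TV_zero (inf_le_left.trans nhdsWithin_le_nhds)
      (fun i => hβ.trans_le (hw i trivial).1) (fun i => hΘ _ (hθ i trivial))
      (hreg.filter_mono inf_le_left) hθ0 hθ0inj (tendsto_comap.mono_left inf_le_right) hε
  obtain ⟨δ, hδ, hDbar⟩ :=
    exists_pos_forall_of_isCompact hK (fun _ => TV_nonneg _ _) hlocal
  refine ⟨δ, hδ, fun w θ hw hθ hlt => ?_⟩
  by_contra! hTV
  exact hlt.not_gt (hDbar (w, θ) ⟨fun i _ => hw i, fun i _ => hθ i⟩ hTV)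

lemma card_le_floor_of_forall_le {w : Fin m → ℝ} {β : ℝ} (hβ : 0 < β) (hw : ∀ i, β ≤ w i)
    (hsum : ∑ i, w i = 1) : m ≤ ⌊1 / β⌋₊ := by
  refine Nat.le_floor ((le_div_iff₀ hβ).2 ?_)
  simpa [hsum] using Finset.card_nsmul_le_sum Finset.univ w β fun i _ => hw i

end LowerBound

theorem typeI_global_lower_bound_general {d k0 : ℕ} {Θ : Set (Param d)} (hΘc : IsCompact Θ)
    (hΘ : ∀ θ ∈ Θ, IsRegularParam θ) {β : ℝ} (hβ : 0 < β) (π0 : Fin k0 → ℝ)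
    {θ0 : Fin k0 → Param d} (hθ0 : ∀ j, IsRegularParam (θ0 j)) (hθ0inj : Function.Injective θ0)
    {ε : ℝ} (hε : 0 < ε) :
    ∃ δ > 0, ∀ (m : ℕ) (w : Fin m → ℝ) (θ : Fin m → Param d),
      (∀ i, θ i ∈ Θ) → (∀ i, β ≤ w i) → ∑ i, w i = 1 → ε < Dbar π0 θ0 w θ →
      δ ≤ TV (mixtureDensity w θ) (mixtureDensity π0 θ0) := by
  choose δ hδ hTV using fun m =>
    exists_pos_le_TV_of_lt_Dbar (π0 := π0) m hΘc hΘ hβ hθ0 hθ0inj hε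
  have hne : (Finset.range (⌊1 / β⌋₊ + 1)).Nonempty := Finset.nonempty_range_add_one
  refine ⟨(Finset.range _).inf' hne δ, (Finset.lt_inf'_iff hne).2 fun m _ => hδ m, ?_⟩
  intro m w θ hθ hw hsum hlt
  have hw1 : ∀ i, w i ≤ 1 := fun i => hsum ▸
    Finset.single_le_sum (fun j _ => hβ.le.trans (hw j)) (Finset.mem_univ i)
  exact (Finset.inf'_le δ <| Finset.mem_range_succ_iff.2 <|
    card_le_floor_of_forall_le hβ hw hsum).trans (hTV m w θ (fun i => ⟨hw i, hw1 i⟩) hθ hlt)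

/-- **Global lower bound in Theorem 1's proof.** In the Type I setting (all true
location parameters `c_j^0` non-zero), for every `ε > 0` the infimum of
`V(p_G, p_{G0})` over all `G ∈ O_{k,β}(Θ)` with `D̄(G, G0) > ε` is strictly positive. -/
theorem typeI_global_lower_bound
    (d k0 k : ℕ) (hd : 0 < d) (hk0 : 0 < k0) (hk : k0 < k)
    (Θ : Set (Param d)) (hΘc : IsCompact Θ)
    (hΘ : ∀ θ ∈ Θ, (θ.2.1).IsSymm ∧ (θ.2.1).PosDef ∧ 0 < θ.2.2.2.2)
    (β : ℝ) (hβ : 0 < β) (hβk : β ≤ 1 / (k : ℝ))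
    (π0 : Fin k0 → ℝ) (θ0 : Fin k0 → Param d)
    (hθ0Θ : ∀ j, θ0 j ∈ Θ) (hθ0inj : Function.Injective θ0)
    (hπ0 : ∀ j, 0 < π0 j) (hπ0sum : ∑ j, π0 j = 1)
    (hc0 : ∀ j, (θ0 j).1 ≠ 0) :
    ∀ ε : ℝ, 0 < ε →
      ∃ δ : ℝ, 0 < δ ∧
        ∀ (m : ℕ) (w : Fin m → ℝ) (θ : Fin m → Param d),
          1 ≤ m → m ≤ k → (∀ i, θ i ∈ Θ) → Function.Injective θ →
          (∀ i, β ≤ w i) → (∑ i, w i) = 1 →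
          ε < Dbar π0 θ0 w θ →
          δ ≤ TV (fun z => ∑ i, w i * Fcomp (θ i) z.1 z.2)
                 (fun z => ∑ j, π0 j * Fcomp (θ0 j) z.1 z.2) := by
  intro ε hε
  have hreg : ∀ θ ∈ Θ, IsRegularParam θ := fun θ hθ => ⟨(hΘ θ hθ).2.1, (hΘ θ hθ).2.2⟩
  obtain ⟨δ, hδ, hTV⟩ := typeI_global_lower_bound_general hΘc hreg hβ π0
    (fun j => hreg _ (hθ0Θ j)) hθ0inj hε
  exact ⟨δ, hδ, fun m w θ _ _ hθ _ => hTV m w θ hθ⟩
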